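/- Assume in addition that κ₁(s) = 0 for all s ∈ I (developable case). Then for all s ∈ I the striction curve σ satisfies σ'(s) = τ₁(s)·v₀(s), σ''(s) = τ₁'(s)·v₀(s) + τ₁(s)·n₀(s), and σ'''(s) = (τ₁''(s) − τ₁(s))·v₀(s) + 2τ₁'(s)·n₀(s) + τ₀(s)τ₁(s)·t₀(s). -/

import Mathlib

noncomputable section
open scoped RealInnerProductSpace

/-- Euclidean 3-space `ℝ³`. -/
abbrev E3 : Type := EuclideanSpace ℝ (Fin 3)

/-- The cross product on `E3`. -/
def cross (u v : E3) : E3 :=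
  (WithLp.equiv 2 (Fin 3 → ℝ)).symm
    ![u 1 * v 2 - u 2 * v 1, u 2 * v 0 - u 0 * v 2, u 0 * v 1 - u 1 * v 0]

/-- Determinant of the 3×3 matrix with columns `u`, `v`, `w`. -/
def det3 (u v w : E3) : ℝ :=
  Matrix.det !![u 0, v 0, w 0; u 1, v 1, w 1; u 2, v 2, w 2]

namespace Ruled

/-- The director curve `e = v₀`. -/
def e (v₀ : ℝ → E3) : ℝ → E3 := v₀

/-- The base curve `r = v₀ × v₁`. -/
def r (v₀ v₁ : ℝ → E3) : ℝ → E3 := fun s => cross (v₀ s) (v₁ s)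

/-- The parametrization `F(s,t) = r(s) + t • e(s)` of the ruled surface. -/
def F (v₀ v₁ : ℝ → E3) (s t : ℝ) : E3 := r v₀ v₁ s + t • v₀ s

/-- `n₀ = v₀'`. -/
def n₀ (v₀ : ℝ → E3) : ℝ → E3 := fun s => deriv v₀ s

/-- `κ₁ = ⟪v₀', v₁'⟫`, the ε-part of the dual curvature. -/
def κ₁ (v₀ v₁ : ℝ → E3) : ℝ → ℝ := fun s => ⟪deriv v₀ s, deriv v₁ s⟫

/-- `n₁ = v₁' - κ₁ • v₀'`. -/
def n₁ (v₀ v₁ : ℝ → E3) : ℝ → E3 := fun s => deriv v₁ s - κ₁ v₀ v₁ s • deriv v₀ s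

/-- `t₀ = v₀ × n₀`. -/
def t₀ (v₀ : ℝ → E3) : ℝ → E3 := fun s => cross (v₀ s) (n₀ v₀ s)

/-- `t₁ = v₀ × n₁ + v₁ × n₀`. -/
def t₁ (v₀ v₁ : ℝ → E3) : ℝ → E3 :=
  fun s => cross (v₀ s) (n₁ v₀ v₁ s) + cross (v₁ s) (n₀ v₀ s)

/-- `τ₀ = ⟪n₀', t₀⟫`, the real part of the dual torsion. -/
def τ₀ (v₀ : ℝ → E3) : ℝ → ℝ := fun s => ⟪deriv (n₀ v₀) s, t₀ v₀ s⟫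

/-- `τ₁ = ⟪n₀', t₁⟫ + ⟪n₁', t₀⟫`, the ε-part of the dual torsion. -/
def τ₁ (v₀ v₁ : ℝ → E3) : ℝ → ℝ :=
  fun s => ⟪deriv (n₀ v₀) s, t₁ v₀ v₁ s⟫ + ⟪deriv (n₁ v₀ v₁) s, t₀ v₀ s⟫

/-- The striction curve `σ(s) = r(s) - ⟪r'(s), e'(s)⟫ • e(s)`. -/
def strict (v₀ v₁ : ℝ → E3) : ℝ → E3 :=
  fun s => r v₀ v₁ s - ⟪deriv (r v₀ v₁) s, deriv (e v₀) s⟫ • e v₀ s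

end Ruled

open Ruled

/-!
Along `v₀` the vectors `v₀`, `n₀`, `t₀ = v₀ × n₀` form an orthonormal frame with
`v₀' = n₀`, `n₀' = -v₀ + τ₀ t₀`, `t₀' = -τ₀ n₀`. Expanding `r' = v₀ × v₁' + n₀ × v₁` in this frame
gives `r' = ⟪v₁, t₀⟫ v₀ - ⟪v₁', t₀⟫ n₀ + κ₁ t₀`, so `σ = r + ⟪v₁', t₀⟫ v₀`; differentiating `σ`
cancels the `n₀`-part, and the coefficient of `v₀` becomes
`⟪v₁, t₀⟫ + ⟪v₁'', t₀⟫ - κ₁ τ₀ = τ₁`. Hence `σ' = τ₁ v₀ + κ₁ t₀` for every ruled surface, and the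
frame equations yield the higher derivatives. Developability is the case `κ₁ = 0`.
-/

namespace E3

open Matrix

theorem cross_eq_toLp_crossProduct (u v : E3) : cross u v = WithLp.toLp 2 (u.ofLp ⨯₃ v.ofLp) := by
  rw [cross_apply]
  rfl

theorem inner_eq_dotProduct (u v : E3) : ⟪u, v⟫ = u.ofLp ⬝ᵥ v.ofLp := by
  rw [EuclideanSpace.inner_eq_star_dotProduct, star_trivial, dotProduct_comm]

theorem isBilinearMap_cross : IsBilinearMap ℝ cross where
  add_left u v w := by simp [cross_eq_toLp_crossProduct]
  smul_left c u v := by simp [cross_eq_toLp_crossProduct]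
  add_right u v w := by simp [cross_eq_toLp_crossProduct]
  smul_right c u v := by simp [cross_eq_toLp_crossProduct]

theorem cross_self (u : E3) : cross u u = 0 := by
  simp [cross_eq_toLp_crossProduct]

theorem cross_swap (u v : E3) : cross u v = -cross v u := by
  simp only [cross_eq_toLp_crossProduct, ← WithLp.toLp_neg, cross_anticomm]

theorem inner_cross_self (u v : E3) : ⟪v, cross u v⟫ = 0 := by
  simp [inner_eq_dotProduct, cross_eq_toLp_crossProduct]

theorem inner_cross_cross (u v w x : E3) :
    ⟪cross u v, cross w x⟫ = ⟪u, w⟫ * ⟪v, x⟫ - ⟪u, x⟫ * ⟪v, w⟫ := by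
  simp only [inner_eq_dotProduct, cross_eq_toLp_crossProduct, cross_dot_cross]

theorem cross_cross_eq_smul_sub_smul (u v w : E3) :
    cross u (cross v w) = ⟪u, w⟫ • v - ⟪u, v⟫ • w := by
  simp only [inner_eq_dotProduct, cross_eq_toLp_crossProduct, cross_cross_eq_smul_sub_smul',
    WithLp.toLp_sub, WithLp.toLp_smul, WithLp.toLp_ofLp, dotProduct_comm v.ofLp u.ofLp]

theorem hasDerivAt_cross {f g : ℝ → E3} {f' g' : E3} {s : ℝ}
    (hf : HasDerivAt f f' s) (hg : HasDerivAt g g' s) :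
    HasDerivAt (fun x ↦ cross (f x) (g x)) (cross (f s) g' + cross f' (g s)) s :=
  isBilinearMap_cross.toContinuousBilinearMap.hasDerivAt_of_bilinear (fun _ ↦ hf) (fun _ ↦ hg)

theorem contDiffOn_cross {E : Type*} [NormedAddCommGroup E] [NormedSpace ℝ E] {f g : E → E3}
    {U : Set E} {n : WithTop ℕ∞} (hf : ContDiffOn ℝ n f U) (hg : ContDiffOn ℝ n g U) :
    ContDiffOn ℝ n (fun x ↦ cross (f x) (g x)) U :=
  isBilinearMap_cross.toContinuousBilinearMap.isBoundedBilinearMap.contDiff.comp_contDiffOn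
    (hf.prodMk hg)

section OrthonormalFrame

variable {v p : E3}

theorem cross_self_cross_of_orthonormal (h : Orthonormal ℝ ![v, p]) :
    cross v (cross v p) = -p := by
  have hv : ‖v‖ = 1 := h.1 0
  have hvp : ⟪v, p⟫ = 0 := h.2 zero_ne_one
  simp [cross_cross_eq_smul_sub_smul, hvp, hv]

theorem cross_right_cross_of_orthonormal (h : Orthonormal ℝ ![v, p]) :
    cross p (cross v p) = v := by
  have hp : ‖p‖ = 1 := h.1 1
  have hpv : ⟪p, v⟫ = 0 := h.2 one_ne_zero
  simp [cross_cross_eq_smul_sub_smul, hpv, hp]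

theorem inner_cross_cross_self_of_orthonormal (h : Orthonormal ℝ ![v, p]) :
    ⟪cross v p, cross v p⟫ = 1 := by
  have hv : ‖v‖ = 1 := h.1 0
  have hp : ‖p‖ = 1 := h.1 1
  have hvp : ⟪v, p⟫ = 0 := h.2 zero_ne_one
  rw [inner_cross_cross]
  simp [hv, hp, hvp]

theorem eq_inner_smul_add_of_orthonormal (h : Orthonormal ℝ ![v, p]) (w : E3) :
    w = ⟪w, v⟫ • v + ⟪w, p⟫ • p + ⟪w, cross v p⟫ • cross v p := by
  set d := cross v p with hd
  have hdv : cross d v = p := by rw [cross_swap, cross_self_cross_of_orthonormal h, neg_neg]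
  have hdp : cross d p = -v := by rw [cross_swap, cross_right_cross_of_orthonormal h]
  -- Expand `d × (w × d)` both from the outside and from the inside.
  have expand_outer : cross d (cross w d) = w - ⟪w, d⟫ • d := by
    rw [cross_cross_eq_smul_sub_smul, inner_cross_cross_self_of_orthonormal h, one_smul,
      real_inner_comm]
  have expand_inner : cross d (cross w d) = ⟪w, p⟫ • p + ⟪w, v⟫ • v := by
    rw [hd, cross_cross_eq_smul_sub_smul w, ← hd, sub_eq_add_neg, ← neg_smul]
    simp only [isBilinearMap_cross.add_right, isBilinearMap_cross.smul_right, hdv, hdp,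
      neg_smul_neg]
  rw [← sub_eq_iff_eq_add, ← expand_outer, expand_inner, add_comm]

theorem cross_left_eq_of_orthonormal (h : Orthonormal ℝ ![v, p]) (w : E3) :
    cross v w = ⟪w, p⟫ • cross v p - ⟪w, cross v p⟫ • p := by
  conv_lhs => rw [eq_inner_smul_add_of_orthonormal h w]
  simp only [isBilinearMap_cross.add_right, isBilinearMap_cross.smul_right, cross_self,
    cross_self_cross_of_orthonormal h]
  module

theorem cross_right_eq_of_orthonormal (h : Orthonormal ℝ ![v, p]) (w : E3) :
    cross p w = ⟪w, cross v p⟫ • v - ⟪w, v⟫ • cross v p := by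
  conv_lhs => rw [eq_inner_smul_add_of_orthonormal h w]
  simp only [isBilinearMap_cross.add_right, isBilinearMap_cross.smul_right, cross_self,
    cross_right_cross_of_orthonormal h, cross_swap p v]
  module

end OrthonormalFrame

end E3

section Differentiability

variable {F : Type*} [NormedAddCommGroup F] [NormedSpace ℝ F] {f : ℝ → F} {U : Set ℝ} {s : ℝ}
  {n : WithTop ℕ∞}

theorem differentiableAt_of_contDiffOn (hU : IsOpen U) (hf : ContDiffOn ℝ n f U) (hn : n ≠ 0)
    (hs : s ∈ U) : DifferentiableAt ℝ f s :=
  (hf.differentiableOn hn).differentiableAt (hU.mem_nhds hs)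

theorem differentiableAt_deriv_of_contDiffOn (hU : IsOpen U) (hf : ContDiffOn ℝ n f U)
    (hn : 2 ≤ n) (hs : s ∈ U) : DifferentiableAt ℝ (deriv f) s :=
  differentiableAt_of_contDiffOn hU
    (hf.deriv_of_isOpen hU (one_add_one_eq_two.trans_le hn)) one_ne_zero hs

end Differentiability

section InnerProductSpace

variable {F : Type*} [NormedAddCommGroup F] [InnerProductSpace ℝ F] {f g : ℝ → F} {U : Set ℝ}
  {c s : ℝ}

theorem inner_deriv_add_inner_deriv_eq_zero (hU : IsOpen U) (hfg : ∀ x ∈ U, ⟪f x, g x⟫ = c)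
    (hs : s ∈ U) (hf : DifferentiableAt ℝ f s) (hg : DifferentiableAt ℝ g s) :
    ⟪f s, deriv g s⟫ + ⟪deriv f s, g s⟫ = 0 := by
  have hconst : U.EqOn (fun x ↦ ⟪f x, g x⟫) fun _ ↦ c := hfg
  rw [← (hf.hasDerivAt.inner ℝ hg.hasDerivAt).deriv, hconst.deriv hU hs, deriv_const]

theorem inner_deriv_eq_zero_of_norm_eq (hU : IsOpen U) (hnorm : ∀ x ∈ U, ‖f x‖ = c) (hs : s ∈ U)
    (hf : DifferentiableAt ℝ f s) : ⟪f s, deriv f s⟫ = 0 := by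
  have hsq : ∀ x ∈ U, ⟪f x, f x⟫ = c ^ 2 := fun x hx ↦ by
    rw [real_inner_self_eq_norm_sq, hnorm x hx]
  have hsum := inner_deriv_add_inner_deriv_eq_zero hU hsq hs hf hf
  rw [real_inner_comm (f s)] at hsum
  linarith

end InnerProductSpace

/-- A curve on the unit sphere that is parametrized by arc length on `U`; the director curve of a
non-cylindrical ruled surface is normalized to be of this kind. Regularity is left to separate
hypotheses. -/
structure IsUnitSpeedSphericalOn {F : Type*} [NormedAddCommGroup F] [NormedSpace ℝ F]
    (v : ℝ → F) (U : Set ℝ) : Prop where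
  norm_eq_one : ∀ s ∈ U, ‖v s‖ = 1
  norm_deriv_eq_one : ∀ s ∈ U, ‖deriv v s‖ = 1

namespace IsUnitSpeedSphericalOn

variable {F : Type*} [NormedAddCommGroup F] [InnerProductSpace ℝ F] {v : ℝ → F} {U : Set ℝ} {s : ℝ}

theorem orthonormal (h : IsUnitSpeedSphericalOn v U) (hU : IsOpen U)
    (hv : DifferentiableOn ℝ v U) (hs : s ∈ U) : Orthonormal ℝ ![v s, deriv v s] := by
  have hperp : ⟪v s, deriv v s⟫ = 0 :=
    inner_deriv_eq_zero_of_norm_eq hU h.norm_eq_one hs (hv.differentiableAt (hU.mem_nhds hs))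
  simp [h.norm_eq_one s hs, h.norm_deriv_eq_one s hs, hperp, orthonormal_vecCons_iff]

theorem inner_deriv_deriv_eq_neg_one (h : IsUnitSpeedSphericalOn v U) (hU : IsOpen U)
    (hv : DifferentiableOn ℝ v U) (hs : s ∈ U) (hv' : DifferentiableAt ℝ (deriv v) s) :
    ⟪v s, deriv (deriv v) s⟫ = -1 := by
  have hperp : ∀ x ∈ U, ⟪v x, deriv v x⟫ = 0 := fun x hx ↦
    (h.orthonormal hU hv hx).2 zero_ne_one
  have hsum := inner_deriv_add_inner_deriv_eq_zero hU hperp hs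
    (hv.differentiableAt (hU.mem_nhds hs)) hv'
  rw [real_inner_self_eq_norm_sq, h.norm_deriv_eq_one s hs] at hsum
  linarith

end IsUnitSpeedSphericalOn

namespace Ruled

open E3
open scoped Topology

variable {v₀ v₁ : ℝ → E3} {U : Set ℝ} {s : ℝ} {n : WithTop ℕ∞}

theorem contDiffOn_n₀ (hU : IsOpen U) (hv₀ : ContDiffOn ℝ (n + 1) v₀ U) :
    ContDiffOn ℝ n (n₀ v₀) U :=
  hv₀.deriv_of_isOpen hU le_rfl

theorem contDiffOn_t₀ (hU : IsOpen U) (hv₀ : ContDiffOn ℝ (n + 1) v₀ U) :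
    ContDiffOn ℝ n (t₀ v₀) U :=
  contDiffOn_cross (hv₀.of_le le_self_add) (contDiffOn_n₀ hU hv₀)

theorem contDiffOn_κ₁ (hU : IsOpen U) (hv₀ : ContDiffOn ℝ (n + 1) v₀ U)
    (hv₁ : ContDiffOn ℝ (n + 1) v₁ U) : ContDiffOn ℝ n (κ₁ v₀ v₁) U :=
  (hv₀.deriv_of_isOpen hU le_rfl).inner ℝ (hv₁.deriv_of_isOpen hU le_rfl)

theorem contDiffOn_n₁ (hU : IsOpen U) (hv₀ : ContDiffOn ℝ (n + 1) v₀ U)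
    (hv₁ : ContDiffOn ℝ (n + 1) v₁ U) : ContDiffOn ℝ n (n₁ v₀ v₁) U :=
  (hv₁.deriv_of_isOpen hU le_rfl).sub
    ((contDiffOn_κ₁ hU hv₀ hv₁).smul (hv₀.deriv_of_isOpen hU le_rfl))

theorem contDiffOn_t₁ (hU : IsOpen U) (hv₀ : ContDiffOn ℝ (n + 1) v₀ U)
    (hv₁ : ContDiffOn ℝ (n + 1) v₁ U) : ContDiffOn ℝ n (t₁ v₀ v₁) U :=
  (contDiffOn_cross (hv₀.of_le le_self_add) (contDiffOn_n₁ hU hv₀ hv₁)).add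
    (contDiffOn_cross (hv₁.of_le le_self_add) (contDiffOn_n₀ hU hv₀))

theorem contDiffOn_τ₀ (hU : IsOpen U) (hv₀ : ContDiffOn ℝ (n + 1 + 1) v₀ U) :
    ContDiffOn ℝ n (τ₀ v₀) U :=
  ((contDiffOn_n₀ hU hv₀).deriv_of_isOpen hU le_rfl).inner ℝ
    (contDiffOn_t₀ hU (hv₀.of_le le_self_add))

theorem contDiffOn_τ₁ (hU : IsOpen U) (hv₀ : ContDiffOn ℝ (n + 1 + 1) v₀ U)
    (hv₁ : ContDiffOn ℝ (n + 1 + 1) v₁ U) : ContDiffOn ℝ n (τ₁ v₀ v₁) U :=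
  (((contDiffOn_n₀ hU hv₀).deriv_of_isOpen hU le_rfl).inner ℝ
    (contDiffOn_t₁ hU (hv₀.of_le le_self_add) (hv₁.of_le le_self_add))).add
  (((contDiffOn_n₁ hU hv₀ hv₁).deriv_of_isOpen hU le_rfl).inner ℝ
    (contDiffOn_t₀ hU (hv₀.of_le le_self_add)))

theorem inner_n₀_t₀ (v₀ : ℝ → E3) (s : ℝ) : ⟪n₀ v₀ s, t₀ v₀ s⟫ = 0 :=
  inner_cross_self _ _

theorem cross_v₀_eq (hframe : Orthonormal ℝ ![v₀ s, n₀ v₀ s]) (w : E3) :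
    cross (v₀ s) w = ⟪w, n₀ v₀ s⟫ • t₀ v₀ s - ⟪w, t₀ v₀ s⟫ • n₀ v₀ s :=
  cross_left_eq_of_orthonormal hframe w

theorem cross_n₀_eq (hframe : Orthonormal ℝ ![v₀ s, n₀ v₀ s]) (w : E3) :
    cross (n₀ v₀ s) w = ⟪w, t₀ v₀ s⟫ • v₀ s - ⟪w, v₀ s⟫ • t₀ v₀ s :=
  cross_right_eq_of_orthonormal hframe w

theorem orthonormal_v₀_n₀ (h : IsUnitSpeedSphericalOn v₀ U) (hU : IsOpen U)
    (hv₀ : DifferentiableOn ℝ v₀ U) (hs : s ∈ U) : Orthonormal ℝ ![v₀ s, n₀ v₀ s] :=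
  h.orthonormal hU hv₀ hs

theorem hasDerivAt_v₀ (hU : IsOpen U) (hv₀ : DifferentiableOn ℝ v₀ U) (hs : s ∈ U) :
    HasDerivAt v₀ (n₀ v₀ s) s :=
  (hv₀.differentiableAt (hU.mem_nhds hs)).hasDerivAt

theorem inner_deriv_n₀_v₀ (h : IsUnitSpeedSphericalOn v₀ U) (hU : IsOpen U)
    (hv₀ : DifferentiableOn ℝ v₀ U) (hs : s ∈ U) (hn₀ : DifferentiableAt ℝ (n₀ v₀) s) :
    ⟪deriv (n₀ v₀) s, v₀ s⟫ = -1 := by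
  rw [real_inner_comm]
  exact h.inner_deriv_deriv_eq_neg_one hU hv₀ hs hn₀

theorem inner_deriv_n₀_n₀ (h : IsUnitSpeedSphericalOn v₀ U) (hU : IsOpen U) (hs : s ∈ U)
    (hn₀ : DifferentiableAt ℝ (n₀ v₀) s) : ⟪deriv (n₀ v₀) s, n₀ v₀ s⟫ = 0 := by
  rw [real_inner_comm]
  exact inner_deriv_eq_zero_of_norm_eq hU h.norm_deriv_eq_one hs hn₀

theorem hasDerivAt_n₀ (h : IsUnitSpeedSphericalOn v₀ U) (hU : IsOpen U)
    (hv₀ : DifferentiableOn ℝ v₀ U) (hs : s ∈ U) (hn₀ : DifferentiableAt ℝ (n₀ v₀) s) :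
    HasDerivAt (n₀ v₀) (-v₀ s + τ₀ v₀ s • t₀ v₀ s) s := by
  refine hn₀.hasDerivAt.congr_deriv ?_
  rw [eq_inner_smul_add_of_orthonormal (orthonormal_v₀_n₀ h hU hv₀ hs) (deriv (n₀ v₀) s),
    inner_deriv_n₀_v₀ h hU hv₀ hs hn₀, inner_deriv_n₀_n₀ h hU hs hn₀, τ₀, t₀]
  module

theorem hasDerivAt_t₀ (h : IsUnitSpeedSphericalOn v₀ U) (hU : IsOpen U)
    (hv₀ : DifferentiableOn ℝ v₀ U) (hs : s ∈ U) (hn₀ : DifferentiableAt ℝ (n₀ v₀) s) :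
    HasDerivAt (t₀ v₀) (-τ₀ v₀ s • n₀ v₀ s) s := by
  refine (hasDerivAt_cross (hasDerivAt_v₀ hU hv₀ hs) hn₀.hasDerivAt).congr_deriv ?_
  rw [E3.cross_self, cross_v₀_eq (orthonormal_v₀_n₀ h hU hv₀ hs),
    inner_deriv_n₀_n₀ h hU hs hn₀, τ₀]
  module

theorem hasDerivAt_frame_combination {a b c : ℝ → ℝ} {a' b' c' : ℝ}
    (h : IsUnitSpeedSphericalOn v₀ U) (hU : IsOpen U) (hv₀ : DifferentiableOn ℝ v₀ U) (hs : s ∈ U)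
    (hn₀ : DifferentiableAt ℝ (n₀ v₀) s)
    (ha : HasDerivAt a a' s) (hb : HasDerivAt b b' s) (hc : HasDerivAt c c' s) :
    HasDerivAt (fun x ↦ a x • v₀ x + b x • n₀ v₀ x + c x • t₀ v₀ x)
      ((a' - b s) • v₀ s + (a s + b' - τ₀ v₀ s * c s) • n₀ v₀ s +
        (τ₀ v₀ s * b s + c') • t₀ v₀ s) s := by
  refine (((ha.smul (hasDerivAt_v₀ hU hv₀ hs)).add
    (hb.smul (hasDerivAt_n₀ h hU hv₀ hs hn₀))).add
    (hc.smul (hasDerivAt_t₀ h hU hv₀ hs hn₀))).congr_deriv ?_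
  module

theorem t₁_eq (hframe : Orthonormal ℝ ![v₀ s, n₀ v₀ s]) (horth : ⟪v₀ s, v₁ s⟫ = 0) :
    t₁ v₀ v₁ s = -(⟪v₁ s, t₀ v₀ s⟫ • v₀ s + ⟪deriv v₁ s, t₀ v₀ s⟫ • n₀ v₀ s) := by
  have hn₁ : n₁ v₀ v₁ s = deriv v₁ s - ⟪deriv v₁ s, n₀ v₀ s⟫ • n₀ v₀ s := by
    rw [n₁, κ₁, n₀, real_inner_comm]
  have hn₁n₀ : ⟪n₁ v₀ v₁ s, n₀ v₀ s⟫ = 0 := by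
    have hnorm : ‖n₀ v₀ s‖ = 1 := hframe.1 1
    rw [hn₁, inner_sub_left, real_inner_smul_left, real_inner_self_eq_norm_sq, hnorm]
    ring
  have hn₁t₀ : ⟪n₁ v₀ v₁ s, t₀ v₀ s⟫ = ⟪deriv v₁ s, t₀ v₀ s⟫ := by
    rw [hn₁, inner_sub_left, real_inner_smul_left, inner_n₀_t₀, mul_zero, sub_zero]
  rw [t₁, cross_swap (v₁ s), cross_v₀_eq hframe, cross_n₀_eq hframe, hn₁n₀, hn₁t₀,
    real_inner_comm (v₀ s), horth]
  module

theorem inner_deriv_n₀_t₁ (h : IsUnitSpeedSphericalOn v₀ U) (hU : IsOpen U)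
    (hv₀ : DifferentiableOn ℝ v₀ U) (hs : s ∈ U) (hn₀ : DifferentiableAt ℝ (n₀ v₀) s)
    (horth : ⟪v₀ s, v₁ s⟫ = 0) : ⟪deriv (n₀ v₀) s, t₁ v₀ v₁ s⟫ = ⟪v₁ s, t₀ v₀ s⟫ := by
  rw [t₁_eq (orthonormal_v₀_n₀ h hU hv₀ hs) horth, inner_neg_right, inner_add_right,
    real_inner_smul_right, real_inner_smul_right, inner_deriv_n₀_v₀ h hU hv₀ hs hn₀,
    inner_deriv_n₀_n₀ h hU hs hn₀]
  ring

theorem inner_deriv_n₁_t₀ (hn₀ : DifferentiableAt ℝ (n₀ v₀) s)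
    (hv₁' : DifferentiableAt ℝ (deriv v₁) s) :
    ⟪deriv (n₁ v₀ v₁) s, t₀ v₀ s⟫ =
      ⟪deriv (deriv v₁) s, t₀ v₀ s⟫ - κ₁ v₀ v₁ s * τ₀ v₀ s := by
  have hκ₁ : DifferentiableAt ℝ (κ₁ v₀ v₁) s := hn₀.inner ℝ hv₁'
  have hn₁ : HasDerivAt (n₁ v₀ v₁) (deriv (deriv v₁) s -
      (κ₁ v₀ v₁ s • deriv (n₀ v₀) s + deriv (κ₁ v₀ v₁) s • n₀ v₀ s)) s :=
    hv₁'.hasDerivAt.sub (hκ₁.hasDerivAt.smul hn₀.hasDerivAt)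
  rw [hn₁.deriv, inner_sub_left, inner_add_left, real_inner_smul_left, real_inner_smul_left,
    inner_n₀_t₀, τ₀]
  ring

theorem τ₁_eq (h : IsUnitSpeedSphericalOn v₀ U) (hU : IsOpen U) (hv₀ : DifferentiableOn ℝ v₀ U)
    (hs : s ∈ U) (hn₀ : DifferentiableAt ℝ (n₀ v₀) s) (hv₁' : DifferentiableAt ℝ (deriv v₁) s)
    (horth : ⟪v₀ s, v₁ s⟫ = 0) :
    τ₁ v₀ v₁ s = ⟪v₁ s, t₀ v₀ s⟫ + ⟪deriv (deriv v₁) s, t₀ v₀ s⟫ - κ₁ v₀ v₁ s * τ₀ v₀ s := by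
  rw [τ₁, inner_deriv_n₀_t₁ h hU hv₀ hs hn₀ horth, inner_deriv_n₁_t₀ hn₀ hv₁', add_sub_assoc]

theorem hasDerivAt_r (hframe : Orthonormal ℝ ![v₀ s, n₀ v₀ s]) (hv₀ : DifferentiableAt ℝ v₀ s)
    (hv₁ : DifferentiableAt ℝ v₁ s) (horth : ⟪v₀ s, v₁ s⟫ = 0) :
    HasDerivAt (r v₀ v₁) (⟪v₁ s, t₀ v₀ s⟫ • v₀ s - ⟪deriv v₁ s, t₀ v₀ s⟫ • n₀ v₀ s +
      κ₁ v₀ v₁ s • t₀ v₀ s) s := by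
  have hv₀' : HasDerivAt v₀ (n₀ v₀ s) s := hv₀.hasDerivAt
  refine (hasDerivAt_cross hv₀' hv₁.hasDerivAt).congr_deriv ?_
  rw [cross_v₀_eq hframe, cross_n₀_eq hframe, real_inner_comm (v₀ s), horth,
    real_inner_comm (n₀ v₀ s), κ₁, n₀]
  module

theorem strict_eq (hframe : Orthonormal ℝ ![v₀ s, n₀ v₀ s]) (hv₀ : DifferentiableAt ℝ v₀ s)
    (hv₁ : DifferentiableAt ℝ v₁ s) (horth : ⟪v₀ s, v₁ s⟫ = 0) :
    strict v₀ v₁ s = r v₀ v₁ s + ⟪deriv v₁ s, t₀ v₀ s⟫ • v₀ s := by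
  have hv₀n₀ : ⟪v₀ s, n₀ v₀ s⟫ = 0 := hframe.2 zero_ne_one
  have hn₀ : ‖n₀ v₀ s‖ = 1 := hframe.1 1
  have ht₀n₀ : ⟪t₀ v₀ s, n₀ v₀ s⟫ = 0 := by rw [real_inner_comm, inner_n₀_t₀]
  have hr'n₀ : ⟪deriv (r v₀ v₁) s, n₀ v₀ s⟫ = -⟪deriv v₁ s, t₀ v₀ s⟫ := by
    rw [(hasDerivAt_r hframe hv₀ hv₁ horth).deriv]
    simp [inner_add_left, inner_sub_left, real_inner_smul_left, hv₀n₀, ht₀n₀, hn₀]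
  change r v₀ v₁ s - ⟪deriv (r v₀ v₁) s, n₀ v₀ s⟫ • v₀ s = _
  rw [hr'n₀, neg_smul, sub_neg_eq_add]

theorem hasDerivAt_strict (h : IsUnitSpeedSphericalOn v₀ U) (hU : IsOpen U)
    (hv₀ : DifferentiableOn ℝ v₀ U) (hv₁ : DifferentiableOn ℝ v₁ U)
    (horth : ∀ x ∈ U, ⟪v₀ x, v₁ x⟫ = 0) (hs : s ∈ U)
    (hn₀ : DifferentiableAt ℝ (n₀ v₀) s) (hv₁' : DifferentiableAt ℝ (deriv v₁) s) :
    HasDerivAt (strict v₀ v₁) (τ₁ v₀ v₁ s • v₀ s + κ₁ v₀ v₁ s • t₀ v₀ s) s := by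
  have hσ : strict v₀ v₁ =ᶠ[𝓝 s] fun x ↦ r v₀ v₁ x + ⟪deriv v₁ x, t₀ v₀ x⟫ • v₀ x := by
    filter_upwards [hU.mem_nhds hs] with x hx
    exact strict_eq (orthonormal_v₀_n₀ h hU hv₀ hx) (hv₀.differentiableAt (hU.mem_nhds hx))
      (hv₁.differentiableAt (hU.mem_nhds hx)) (horth x hx)
  have hr := hasDerivAt_r (orthonormal_v₀_n₀ h hU hv₀ hs) (hv₀.differentiableAt (hU.mem_nhds hs))
    (hv₁.differentiableAt (hU.mem_nhds hs)) (horth s hs)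
  have hinner := hv₁'.hasDerivAt.inner ℝ (hasDerivAt_t₀ h hU hv₀ hs hn₀)
  have hv₁'n₀ : ⟪deriv v₁ s, n₀ v₀ s⟫ = κ₁ v₀ v₁ s := real_inner_comm _ _
  refine ((hr.add (hinner.smul (hasDerivAt_v₀ hU hv₀ hs))).congr_of_eventuallyEq hσ).congr_deriv ?_
  rw [τ₁_eq h hU hv₀ hs hn₀ hv₁' (horth s hs), real_inner_smul_right, hv₁'n₀]
  module

theorem deriv_strict (h : IsUnitSpeedSphericalOn v₀ U) (hU : IsOpen U)
    (hv₀ : ContDiffOn ℝ 2 v₀ U) (hv₁ : ContDiffOn ℝ 2 v₁ U) (horth : ∀ x ∈ U, ⟪v₀ x, v₁ x⟫ = 0)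
    (hs : s ∈ U) : deriv (strict v₀ v₁) s = τ₁ v₀ v₁ s • v₀ s + κ₁ v₀ v₁ s • t₀ v₀ s :=
  (hasDerivAt_strict h hU (hv₀.differentiableOn two_ne_zero) (hv₁.differentiableOn two_ne_zero)
    horth hs (differentiableAt_deriv_of_contDiffOn hU hv₀ le_rfl hs)
    (differentiableAt_deriv_of_contDiffOn hU hv₁ le_rfl hs)).deriv

theorem deriv_deriv_strict (h : IsUnitSpeedSphericalOn v₀ U) (hU : IsOpen U)
    (hv₀ : ContDiffOn ℝ 3 v₀ U) (hv₁ : ContDiffOn ℝ 3 v₁ U) (horth : ∀ x ∈ U, ⟪v₀ x, v₁ x⟫ = 0)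
    (hs : s ∈ U) :
    deriv (deriv (strict v₀ v₁)) s =
      deriv (τ₁ v₀ v₁) s • v₀ s + (τ₁ v₀ v₁ s - τ₀ v₀ s * κ₁ v₀ v₁ s) • n₀ v₀ s +
        deriv (κ₁ v₀ v₁) s • t₀ v₀ s := by
  have htwo_le : (2 : WithTop ℕ∞) ≤ 3 := by norm_num
  have hn₀ := differentiableAt_deriv_of_contDiffOn hU hv₀ htwo_le hs
  have hτ₁ : DifferentiableAt ℝ (τ₁ v₀ v₁) s :=
    differentiableAt_of_contDiffOn (n := 1) hU
      (contDiffOn_τ₁ hU (hv₀.of_le (by norm_num)) (hv₁.of_le (by norm_num))) one_ne_zero hs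
  have hκ₁ : DifferentiableAt ℝ (κ₁ v₀ v₁) s :=
    hn₀.inner ℝ (differentiableAt_deriv_of_contDiffOn hU hv₁ htwo_le hs)
  have hσ' : U.EqOn (deriv (strict v₀ v₁))
      fun x ↦ τ₁ v₀ v₁ x • v₀ x + (0 : ℝ) • n₀ v₀ x + κ₁ v₀ v₁ x • t₀ v₀ x := fun x hx ↦ by
    rw [deriv_strict h hU (hv₀.of_le htwo_le) (hv₁.of_le htwo_le) horth hx]
    module
  rw [hσ'.deriv hU hs, (hasDerivAt_frame_combination h hU (hv₀.differentiableOn three_ne_zero) hs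
    hn₀ hτ₁.hasDerivAt (hasDerivAt_const s 0) hκ₁.hasDerivAt).deriv]
  module

theorem deriv_deriv_deriv_strict (h : IsUnitSpeedSphericalOn v₀ U) (hU : IsOpen U)
    (hv₀ : ContDiffOn ℝ 4 v₀ U) (hv₁ : ContDiffOn ℝ 4 v₁ U) (horth : ∀ x ∈ U, ⟪v₀ x, v₁ x⟫ = 0)
    (hs : s ∈ U) :
    deriv (deriv (deriv (strict v₀ v₁))) s =
      (deriv (deriv (τ₁ v₀ v₁)) s - τ₁ v₀ v₁ s + τ₀ v₀ s * κ₁ v₀ v₁ s) • v₀ s +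
        (2 * deriv (τ₁ v₀ v₁) s - deriv (τ₀ v₀) s * κ₁ v₀ v₁ s -
          2 * τ₀ v₀ s * deriv (κ₁ v₀ v₁) s) • n₀ v₀ s +
        (τ₀ v₀ s * τ₁ v₀ v₁ s - τ₀ v₀ s ^ 2 * κ₁ v₀ v₁ s +
          deriv (deriv (κ₁ v₀ v₁)) s) • t₀ v₀ s := by
  have hthree_le : (3 : WithTop ℕ∞) ≤ 4 := by norm_num
  have hτ₀ : ContDiffOn ℝ 2 (τ₀ v₀) U := contDiffOn_τ₀ hU (hv₀.of_le (by norm_num))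
  have hτ₁ : ContDiffOn ℝ 2 (τ₁ v₀ v₁) U :=
    contDiffOn_τ₁ hU (hv₀.of_le (by norm_num)) (hv₁.of_le (by norm_num))
  have hκ₁ : ContDiffOn ℝ 2 (κ₁ v₀ v₁) U :=
    contDiffOn_κ₁ hU (hv₀.of_le (by norm_num)) (hv₁.of_le (by norm_num))
  have hasDeriv {f : ℝ → ℝ} (hf : ContDiffOn ℝ 2 f U) : HasDerivAt f (deriv f s) s :=
    (differentiableAt_of_contDiffOn hU hf two_ne_zero hs).hasDerivAt
  have hasDeriv' {f : ℝ → ℝ} (hf : ContDiffOn ℝ 2 f U) :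
      HasDerivAt (deriv f) (deriv (deriv f) s) s :=
    (differentiableAt_deriv_of_contDiffOn hU hf le_rfl hs).hasDerivAt
  have hcoeff : HasDerivAt (fun x ↦ τ₁ v₀ v₁ x - τ₀ v₀ x * κ₁ v₀ v₁ x)
      (deriv (τ₁ v₀ v₁) s -
        (deriv (τ₀ v₀) s * κ₁ v₀ v₁ s + τ₀ v₀ s * deriv (κ₁ v₀ v₁) s)) s :=
    (hasDeriv hτ₁).sub ((hasDeriv hτ₀).mul (hasDeriv hκ₁))
  have hσ'' := fun x hx ↦
    deriv_deriv_strict (s := x) h hU (hv₀.of_le hthree_le) (hv₁.of_le hthree_le) horth hx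
  rw [Set.EqOn.deriv hσ'' hU hs, (hasDerivAt_frame_combination h hU
    (hv₀.differentiableOn four_ne_zero) hs
    (differentiableAt_deriv_of_contDiffOn hU hv₀ (by norm_num) hs) (hasDeriv' hτ₁) hcoeff
    (hasDeriv' hκ₁)).deriv]
  module

end Ruled

theorem striction_derivatives_developable_general {U : Set ℝ} {v₀ v₁ : ℝ → E3} {s : ℝ}
    (h : IsUnitSpeedSphericalOn v₀ U) (hU : IsOpen U)
    (hv₀ : ContDiffOn ℝ 4 v₀ U) (hv₁ : ContDiffOn ℝ 4 v₁ U)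
    (horth : ∀ x ∈ U, ⟪v₀ x, v₁ x⟫ = 0) (hs : s ∈ U) :
    deriv (strict v₀ v₁) s = τ₁ v₀ v₁ s • v₀ s + κ₁ v₀ v₁ s • t₀ v₀ s ∧
    deriv (deriv (strict v₀ v₁)) s =
      deriv (τ₁ v₀ v₁) s • v₀ s + (τ₁ v₀ v₁ s - τ₀ v₀ s * κ₁ v₀ v₁ s) • n₀ v₀ s +
        deriv (κ₁ v₀ v₁) s • t₀ v₀ s ∧
    deriv (deriv (deriv (strict v₀ v₁))) s =
      (deriv (deriv (τ₁ v₀ v₁)) s - τ₁ v₀ v₁ s + τ₀ v₀ s * κ₁ v₀ v₁ s) • v₀ s +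
        (2 * deriv (τ₁ v₀ v₁) s - deriv (τ₀ v₀) s * κ₁ v₀ v₁ s -
          2 * τ₀ v₀ s * deriv (κ₁ v₀ v₁) s) • n₀ v₀ s +
        (τ₀ v₀ s * τ₁ v₀ v₁ s - τ₀ v₀ s ^ 2 * κ₁ v₀ v₁ s +
          deriv (deriv (κ₁ v₀ v₁)) s) • t₀ v₀ s := by
  have htwo_le : (2 : WithTop ℕ∞) ≤ 4 := by norm_num
  have hthree_le : (3 : WithTop ℕ∞) ≤ 4 := by norm_num
  exact ⟨deriv_strict h hU (hv₀.of_le htwo_le) (hv₁.of_le htwo_le) horth hs,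
    deriv_deriv_strict h hU (hv₀.of_le hthree_le) (hv₁.of_le hthree_le) horth hs,
    deriv_deriv_deriv_strict h hU hv₀ hv₁ horth hs⟩

/-- In the developable case the striction curve satisfies `σ' = τ₁ • v₀`,
`σ'' = τ₁' • v₀ + τ₁ • n₀` and `σ⁽³⁾ = (τ₁'' - τ₁) • v₀ + 2τ₁' • n₀ + τ₀τ₁ • t₀`. -/
theorem striction_derivatives_developable
    (I : Set ℝ) (v₀ v₁ : ℝ → E3)
    (hI : IsOpen I) (hI' : I.OrdConnected)
    (hv₀ : ContDiffOn ℝ (⊤ : ℕ∞) v₀ I) (hv₁ : ContDiffOn ℝ (⊤ : ℕ∞) v₁ I)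
    (hunit : ∀ s ∈ I, ‖v₀ s‖ = 1) (horth : ∀ s ∈ I, ⟪v₀ s, v₁ s⟫ = 0)
    (harc : ∀ s ∈ I, ‖deriv v₀ s‖ = 1)
    (hdev : ∀ s ∈ I, κ₁ v₀ v₁ s = 0) :
    ∀ s ∈ I,
      deriv (strict v₀ v₁) s = τ₁ v₀ v₁ s • v₀ s ∧
      deriv (deriv (strict v₀ v₁)) s =
        deriv (τ₁ v₀ v₁) s • v₀ s + τ₁ v₀ v₁ s • n₀ v₀ s ∧
      deriv (deriv (deriv (strict v₀ v₁))) s =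
        (deriv (deriv (τ₁ v₀ v₁)) s - τ₁ v₀ v₁ s) • v₀ s +
          (2 * deriv (τ₁ v₀ v₁) s) • n₀ v₀ s +
          (τ₀ v₀ s * τ₁ v₀ v₁ s) • t₀ v₀ s := by
  have hκ₁ : I.EqOn (κ₁ v₀ v₁) 0 := hdev
  have hκ₁' : I.EqOn (deriv (κ₁ v₀ v₁)) 0 := fun s hs ↦ by simpa using hκ₁.deriv hI hs
  have hκ₁'' : I.EqOn (deriv (deriv (κ₁ v₀ v₁))) 0 := fun s hs ↦ by simpa using hκ₁'.deriv hI hs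
  intro s hs
  have hgeneral := striction_derivatives_developable_general ⟨hunit, harc⟩ hI
    (contDiffOn_infty.1 hv₀ 4) (contDiffOn_infty.1 hv₁ 4) horth hs
  simpa [hκ₁ hs, hκ₁' hs, hκ₁'' hs] using hgeneral
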